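/- For all positive integers b and c, the symmetrical antitree AT(1,b,c,c,b,1) (which has diameter 5) is not Bonnet-Myers sharp; that is, there are no symmetrical antitrees with a_1=1 of diameter 5 that are Bonnet-Myers sharp. -/

import Mathlib

open scoped Classical
open Finset

noncomputable section

/-- The degree of a vertex `x` in the graph `G`. -/
def deg {V : Type*} [Fintype V] (G : SimpleGraph V) (x : V) : ℕ :=
  (Finset.univ.filter (fun y => G.Adj x y)).card

/-- The diameter of `G`: the maximum of the combinatorial distance over all pairs of vertices. -/
def diam {V : Type*} [Fintype V] (G : SimpleGraph V) : ℕ :=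
  Finset.univ.sup (fun xy : V × V => G.dist xy.1 xy.2)

/-- The probability measure `μ_x^p` of the lazy simple random walk at `x` with idleness `p`. -/
def mu {V : Type*} [Fintype V] (G : SimpleGraph V) (p : ℝ) (x : V) : V → ℝ :=
  fun z => if z = x then p else if G.Adj x z then (1 - p) / (deg G x : ℝ) else 0

/-- The Wasserstein distance `W₁(μ₁, μ₂)` with respect to the combinatorial distance of `G`:
the infimum of the total transport cost over all transport plans from `μ₁` to `μ₂`. -/
def W1 {V : Type*} [Fintype V] (G : SimpleGraph V) (μ₁ μ₂ : V → ℝ) : ℝ :=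
  sInf {c : ℝ | ∃ π : V → V → ℝ,
    (∀ x y, 0 ≤ π x y ∧ π x y ≤ 1) ∧
    (∀ x, ∑ y, π x y = μ₁ x) ∧
    (∀ y, ∑ x, π x y = μ₂ y) ∧
    c = ∑ x, ∑ y, (G.dist x y : ℝ) * π x y}

/-- The `p`-Ollivier-Ricci curvature `κ_p(x,y) = 1 - W₁(μ_x^p, μ_y^p)`. -/
def kappa {V : Type*} [Fintype V] (G : SimpleGraph V) (p : ℝ) (x y : V) : ℝ :=
  1 - W1 G (mu G p x) (mu G p y)

/-- The Lin-Lu-Yau curvature `κ_LLY(x,y) = lim_{p→1} κ_p(x,y)/(1-p)`. -/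
def kappaLLY {V : Type*} [Fintype V] (G : SimpleGraph V) (x y : V) : ℝ :=
  Filter.limUnder (nhdsWithin 1 (Set.Iio 1)) (fun p => kappa G p x y / (1 - p))

/-- `G` is Bonnet-Myers sharp if the infimum of `κ_LLY` over the edges equals `2/diam(G)`. -/
def BMSharp {V : Type*} [Fintype V] (G : SimpleGraph V) : Prop :=
  sInf {r : ℝ | ∃ x y, G.Adj x y ∧ r = kappaLLY G x y} = 2 / (diam G : ℝ)

/-- `G` is obtained from the complete graph on its vertex set by deleting a matching
(a set of pairwise disjoint edges, encoded as a symmetric irreflexive relation in which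
every vertex has at most one partner). -/
def IsMatchingDeletionOfComplete {V : Type*} (G : SimpleGraph V) : Prop :=
  ∃ M : V → V → Prop, Symmetric M ∧ (∀ x, ¬ M x x) ∧
    (∀ x y z, M x y → M x z → y = z) ∧
    (∀ x y, G.Adj x y ↔ x ≠ y ∧ ¬ M x y)

/-- The graph `G(a,b)` on `2a+b` vertices `u_1, …, u_{2a}, v_1, …, v_b` (encoded as
`Fin (2a+b)`, with `u_i` the index `i-1` and `v_j` the index `2a+j-1`), in which two distinct
vertices are adjacent unless they form a pair `{u_{2i-1}, u_{2i}}`, i.e. `G(a,b)` is the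
complete graph `K_{2a+b}` with a matching of size `a` deleted. -/
def Gab (a b : ℕ) : SimpleGraph (Fin (2*a+b)) where
  Adj x y := x ≠ y ∧ ¬((x : ℕ) < 2*a ∧ (y : ℕ) < 2*a ∧ (x : ℕ)/2 = (y : ℕ)/2)
  symm := by
    refine ⟨?_⟩
    intro x y h
    exact ⟨h.1.symm, fun hc => h.2 ⟨hc.2.1, hc.1, hc.2.2.symm⟩⟩
  loopless := by refine ⟨?_⟩; intro x h; exact h.1 rfl

/-- The antitree `AT(a_1, …, a_N)` on the disjoint union of sets `V_1, …, V_N` with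
`|V_k| = a_k` (0-indexed here: `V_k` is `Fin (a k)` for `k : Fin N`): two distinct vertices
are adjacent iff they lie in the same set or in consecutive sets. -/
def antitree (N : ℕ) (a : Fin N → ℕ) : SimpleGraph (Σ k : Fin N, Fin (a k)) where
  Adj x y := x ≠ y ∧
    ((x.1 : ℕ) = (y.1 : ℕ) ∨ (x.1 : ℕ) + 1 = (y.1 : ℕ) ∨ (y.1 : ℕ) + 1 = (x.1 : ℕ))
  symm := by
    refine ⟨?_⟩
    intro x y h
    refine ⟨h.1.symm, ?_⟩
    rcases h.2 with h2 | h2 | h2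
    · exact Or.inl h2.symm
    · exact Or.inr (Or.inr h2)
    · exact Or.inr (Or.inl h2)
  loopless := by refine ⟨?_⟩; intro x h; exact h.1 rfl

/-!
For a 1-Lipschitz function `f` and an edge `x ∼ y` with `f y - f x = 1`, Kantorovich duality bounds
`κ_LLY(x, y)` by `Δf(x) - Δf(y)`, where `Δ` is the random walk Laplacian. Summing a lower bound `K`
on the curvature along a geodesic on which `f` grows with unit speed gives
`K · length ≤ Δf(start) - Δf(end) ≤ 2`. If `K · length = 2`, which is Bonnet-Myers sharpness for a
diametral geodesic, then equality holds throughout and `Δf` decreases from `1` to `-1` linearly.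

On an antitree of diameter `L` with layers of sizes `a_0, …, a_L`, take for `f` the index of the
layer. Linearity of `Δf` then reads
`L (a_{k+1} - a_{k-1}) = (L - 2k) (a_{k-1} + a_k + a_{k+1} - 1)` for `0 < k < L`.
For odd `L` the difference of the equations for the two middle layers `k` and `k + 1` is
`(L - 2) (a_k + a_{k+1}) + 2 = (L + 1) (a_{k-1} + a_{k+2})`, which is impossible modulo `3` when
`L ≡ 5 (mod 6)`.
-/

/-! ### Lipschitz functions -/

section Lipschitz

variable {V : Type*}

/-- The 1-Lipschitz functions on `G`, the potentials of Kantorovich duality. As the condition is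
imposed on all ordered pairs, the absolute value is dispensable. -/
def IsOneLipschitz (G : SimpleGraph V) (f : V → ℝ) : Prop :=
  ∀ u v, f v - f u ≤ G.dist u v

variable {G : SimpleGraph V} {f : V → ℝ} {x y : V}

lemma isOneLipschitz_of_adj (hG : G.Preconnected) (hf : ∀ x y, G.Adj x y → f y - f x ≤ 1) :
    IsOneLipschitz G f := by
  intro u v
  obtain ⟨w, hw⟩ := (hG u v).exists_walk_length_eq_dist
  rw [← hw]
  clear hw
  induction w with
  | nil => simp
  | cons h w ih =>
    rw [SimpleGraph.Walk.length_cons, Nat.cast_succ]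
    linarith [hf _ _ h]

lemma IsOneLipschitz.neg (hf : IsOneLipschitz G f) : IsOneLipschitz G (-f) := fun u v => by
  have h := hf v u
  rw [SimpleGraph.dist_comm] at h
  simpa only [Pi.neg_apply, neg_sub_neg] using h

lemma IsOneLipschitz.sub_le_one (hf : IsOneLipschitz G f) (h : G.Adj x y) : f y - f x ≤ 1 := by
  simpa [SimpleGraph.dist_eq_one_iff_adj.mpr h] using hf x y

end Lipschitz

/-! ### Transport plans and the Wasserstein distance -/

section Transport

variable {V : Type*} [Fintype V]

/-- The transport plans from `μ₁` to `μ₂`, over which the infimum `W1` is taken. -/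
def transportPlans (μ₁ μ₂ : V → ℝ) : Set (V → V → ℝ) :=
  {π | (∀ x y, 0 ≤ π x y ∧ π x y ≤ 1) ∧ (∀ x, ∑ y, π x y = μ₁ x) ∧ ∀ y, ∑ x, π x y = μ₂ y}

/-- The total cost of a transport plan with respect to the combinatorial distance. -/
def transportCost (G : SimpleGraph V) (π : V → V → ℝ) : ℝ :=
  ∑ x, ∑ y, (G.dist x y : ℝ) * π x y

variable {G : SimpleGraph V} {μ₁ μ₂ ν₁ ν₂ f : V → ℝ} {π ρ : V → V → ℝ} {s t : ℝ}

lemma transportPlans_nonempty (h₁ : μ₁ ∈ stdSimplex ℝ V) (h₂ : μ₂ ∈ stdSimplex ℝ V) :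
    (transportPlans μ₁ μ₂).Nonempty := by
  have le_one {μ : V → ℝ} (h : μ ∈ stdSimplex ℝ V) (x : V) : μ x ≤ 1 :=
    h.2 ▸ single_le_sum (fun z _ => h.1 z) (mem_univ x)
  refine ⟨fun x y => μ₁ x * μ₂ y, fun x y => ⟨mul_nonneg (h₁.1 x) (h₂.1 y),
    mul_le_one₀ (le_one h₁ x) (h₂.1 y) (le_one h₂ y)⟩, fun x => ?_, fun y => ?_⟩
  · rw [← mul_sum, h₂.2, mul_one]
  · rw [← sum_mul, h₁.2, one_mul]

lemma smul_add_smul_mem_transportPlans (hπ : π ∈ transportPlans μ₁ μ₂)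
    (hρ : ρ ∈ transportPlans ν₁ ν₂) (hs : 0 ≤ s) (ht : 0 ≤ t) (hst : s + t = 1) :
    s • π + t • ρ ∈ transportPlans (s • μ₁ + t • ν₁) (s • μ₂ + t • ν₂) := by
  refine ⟨fun x y => convex_Icc (0 : ℝ) 1 (hπ.1 x y) (hρ.1 x y) hs ht hst, fun x => ?_, fun y => ?_⟩
  · simp [sum_add_distrib, ← mul_sum, hπ.2.1, hρ.2.1]
  · simp [sum_add_distrib, ← mul_sum, hπ.2.2, hρ.2.2]

lemma transportCost_smul_add_smul (G : SimpleGraph V) (s t : ℝ) (π ρ : V → V → ℝ) :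
    transportCost G (s • π + t • ρ) = s * transportCost G π + t * transportCost G ρ := by
  simp only [transportCost, Pi.add_apply, Pi.smul_apply, smul_eq_mul, mul_sum,
    ← sum_add_distrib]
  exact sum_congr rfl fun x _ => sum_congr rfl fun y _ => by ring

lemma W1_eq_sInf_image (G : SimpleGraph V) (μ₁ μ₂ : V → ℝ) :
    W1 G μ₁ μ₂ = sInf (transportCost G '' transportPlans μ₁ μ₂) := by
  simp only [W1, transportPlans, transportCost, Set.image, Set.mem_ofPred_eq, and_assoc, eq_comm]

lemma bddBelow_transportCost_image (G : SimpleGraph V) (μ₁ μ₂ : V → ℝ) :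
    BddBelow (transportCost G '' transportPlans μ₁ μ₂) := by
  refine ⟨0, ?_⟩
  rintro _ ⟨π, hπ, rfl⟩
  exact sum_nonneg fun x _ => sum_nonneg fun y _ => mul_nonneg (Nat.cast_nonneg _) (hπ.1 x y).1

lemma W1_le_transportCost (hπ : π ∈ transportPlans μ₁ μ₂) : W1 G μ₁ μ₂ ≤ transportCost G π := by
  rw [W1_eq_sInf_image]
  exact csInf_le (bddBelow_transportCost_image G μ₁ μ₂) ⟨π, hπ, rfl⟩

lemma W1_single_le_dist (G : SimpleGraph V) (x y : V) :
    W1 G (Pi.single x 1) (Pi.single y 1) ≤ G.dist x y := by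
  let π : V → V → ℝ := fun u v => if u = x ∧ v = y then 1 else 0
  have hπ : π ∈ transportPlans (Pi.single x 1) (Pi.single y 1) := by
    refine ⟨fun u v => ?_, fun u => ?_, fun v => ?_⟩
    · by_cases h : u = x ∧ v = y <;> simp [π, h]
    · by_cases h : u = x <;> simp [π, h]
    · by_cases h : v = y <;> simp [π, h]
  calc W1 G (Pi.single x 1) (Pi.single y 1) ≤ transportCost G π := W1_le_transportCost hπ
    _ = G.dist x y := by simp [transportCost, π, ite_and]

open scoped Pointwise in
theorem convexOn_W1 (G : SimpleGraph V) :
    ConvexOn ℝ (stdSimplex ℝ V ×ˢ stdSimplex ℝ V) fun μ => W1 G μ.1 μ.2 := by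
  refine ⟨(convex_stdSimplex ℝ V).prod (convex_stdSimplex ℝ V), ?_⟩
  rintro ⟨μ₁, μ₂⟩ hμ ⟨ν₁, ν₂⟩ hν s t hs ht hst
  have hneμ := (transportPlans_nonempty hμ.1 hμ.2).image (transportCost G)
  have hneν := (transportPlans_nonempty hν.1 hν.2).image (transportCost G)
  have hbdμ := bddBelow_transportCost_image G μ₁ μ₂
  have hbdν := bddBelow_transportCost_image G ν₁ ν₂
  simp only [W1_eq_sInf_image G μ₁, W1_eq_sInf_image G ν₁]
  rw [← Real.sInf_smul_of_nonneg hs, ← Real.sInf_smul_of_nonneg ht,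
    ← csInf_add hneμ.smul_set (hbdμ.smul_of_nonneg hs) hneν.smul_set (hbdν.smul_of_nonneg ht)]
  refine le_csInf (hneμ.smul_set.add hneν.smul_set) ?_
  rintro _ ⟨_, ⟨_, ⟨π, hπ, rfl⟩, rfl⟩, _, ⟨_, ⟨ρ, hρ, rfl⟩, rfl⟩, rfl⟩
  calc W1 G (s • μ₁ + t • ν₁) (s • μ₂ + t • ν₂) ≤ transportCost G (s • π + t • ρ) :=
        W1_le_transportCost (smul_add_smul_mem_transportPlans hπ hρ hs ht hst)
    _ = s * transportCost G π + t * transportCost G ρ := transportCost_smul_add_smul G s t π ρ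

lemma IsOneLipschitz.sum_mul_sub_le_transportCost (hf : IsOneLipschitz G f)
    (hπ : π ∈ transportPlans μ₁ μ₂) :
    ∑ z, f z * μ₂ z - ∑ z, f z * μ₁ z ≤ transportCost G π := by
  have h₁ : ∑ z, f z * μ₁ z = ∑ x, ∑ y, f x * π x y := by simp only [← mul_sum, hπ.2.1]
  have h₂ : ∑ z, f z * μ₂ z = ∑ x, ∑ y, f y * π x y := by
    rw [sum_comm]
    simp only [← mul_sum, hπ.2.2]
  simp only [h₁, h₂, ← sum_sub_distrib, ← sub_mul]
  exact sum_le_sum fun x _ => sum_le_sum fun y _ =>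
    mul_le_mul_of_nonneg_right (hf x y) (hπ.1 x y).1

lemma IsOneLipschitz.sum_mul_sub_le_W1 (hf : IsOneLipschitz G f) (h₁ : μ₁ ∈ stdSimplex ℝ V)
    (h₂ : μ₂ ∈ stdSimplex ℝ V) : ∑ z, f z * μ₂ z - ∑ z, f z * μ₁ z ≤ W1 G μ₁ μ₂ := by
  rw [W1_eq_sInf_image]
  refine le_csInf ((transportPlans_nonempty h₁ h₂).image _) ?_
  rintro _ ⟨π, hπ, rfl⟩
  exact hf.sum_mul_sub_le_transportCost hπ

end Transport

/-! ### The Laplacian and the Lin-Lu-Yau curvature -/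

section Curvature

variable {V : Type*} [Fintype V] {G : SimpleGraph V} {f : V → ℝ} {p : ℝ} {x y : V}

/-- The random walk Laplacian `Δf(x)`, the mean of `f z - f x` over the neighbours `z` of `x`; it is
`0` at an isolated vertex. -/
def laplacian (G : SimpleGraph V) (f : V → ℝ) (x : V) : ℝ :=
  (∑ z with G.Adj x z, (f z - f x)) / deg G x

lemma deg_pos_of_adj (h : G.Adj x y) : 0 < deg G x :=
  card_pos.mpr ⟨y, by simpa using h⟩

lemma mu_one (G : SimpleGraph V) (x : V) : mu G 1 x = Pi.single x 1 := by
  ext z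
  simp [mu, Pi.single_apply]

lemma mu_convex_combination (G : SimpleGraph V) (x : V) {p q s t : ℝ} (hst : s + t = 1) :
    mu G (s • p + t • q) x = s • mu G p x + t • mu G q x := by
  obtain rfl : t = 1 - s := by linarith
  ext z
  simp only [mu, Pi.add_apply, Pi.smul_apply, smul_eq_mul]
  split_ifs <;> ring

lemma sum_sub_mul_mu (G : SimpleGraph V) (p : ℝ) (f : V → ℝ) (x : V) :
    ∑ z, (f z - f x) * mu G p x z = (1 - p) * laplacian G f x := by
  have hz (z : V) : (f z - f x) * mu G p x z =
      if G.Adj x z then (1 - p) * ((f z - f x) / deg G x) else 0 := by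
    by_cases h : z = x
    · simp [h]
    · simp only [mu, h, if_false]
      split_ifs <;> ring
  simp only [hz, laplacian, ← sum_filter, sum_div, mul_sum]

lemma sum_mu (p : ℝ) (hx : 0 < deg G x) : ∑ z, mu G p x z = 1 := by
  have hsum : ∑ z, mu G p x z = p + deg G x * ((1 - p) / deg G x) := by
    have hz (z : V) : mu G p x z =
        (if z = x then p else 0) + if G.Adj x z then (1 - p) / (deg G x : ℝ) else 0 := by
      by_cases h : z = x <;> simp [mu, h]
    simp [hz, sum_add_distrib, ← sum_filter, deg]
  rw [hsum, mul_div_cancel₀ _ (by positivity)]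
  ring

lemma mu_mem_stdSimplex (hp : p ∈ Set.Icc (0 : ℝ) 1) (hx : 0 < deg G x) :
    mu G p x ∈ stdSimplex ℝ V := by
  refine ⟨fun z => ?_, sum_mu p hx⟩
  have h₀ := hp.1
  have h₁ := sub_nonneg.mpr hp.2
  unfold mu
  split_ifs <;> positivity

lemma sum_mul_mu (p : ℝ) (f : V → ℝ) (hx : 0 < deg G x) :
    ∑ z, f z * mu G p x z = f x + (1 - p) * laplacian G f x := by
  rw [← sum_sub_mul_mu]
  simp [sub_mul, ← mul_sum, sum_mu p hx]

lemma concaveOn_kappa (hx : 0 < deg G x) (hy : 0 < deg G y) :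
    ConcaveOn ℝ (Set.Icc 0 1) fun p => kappa G p x y := by
  refine ⟨convex_Icc 0 1, fun p hp q hq s t hs ht hst => ?_⟩
  have hW := (convexOn_W1 G).2 (x := (mu G p x, mu G p y)) (y := (mu G q x, mu G q y))
    ⟨mu_mem_stdSimplex hp hx, mu_mem_stdSimplex hp hy⟩
    ⟨mu_mem_stdSimplex hq hx, mu_mem_stdSimplex hq hy⟩ hs ht hst
  simp only [kappa, mu_convex_combination G _ hst]
  simp only [Prod.smul_mk, Prod.mk_add_mk, smul_eq_mul] at hW ⊢
  linarith

lemma kappa_one_nonneg (h : G.Adj x y) : 0 ≤ kappa G 1 x y := by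
  have hW := W1_single_le_dist G x y
  rw [SimpleGraph.dist_eq_one_iff_adj.mpr h, Nat.cast_one] at hW
  simpa only [kappa, mu_one, sub_nonneg] using hW

lemma monotoneOn_kappa_div (h : G.Adj x y) :
    MonotoneOn (fun p => kappa G p x y / (1 - p)) (Set.Ioo 0 1) := by
  intro p hp q hq hpq
  have hp₁ : 0 < 1 - p := sub_pos.mpr hp.2
  have hq₁ : 0 < 1 - q := sub_pos.mpr hq.2
  have hs : (1 - q) / (1 - p) ≤ 1 := (div_le_one hp₁).mpr (by linarith)
  have hq_eq : ((1 - q) / (1 - p)) • p + (1 - (1 - q) / (1 - p)) • (1 : ℝ) = q := by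
    simp only [smul_eq_mul]
    field_simp
    ring
  have hconc := (concaveOn_kappa (deg_pos_of_adj h) (deg_pos_of_adj h.symm)).2
    ⟨hp.1.le, hp.2.le⟩ (Set.right_mem_Icc.mpr zero_le_one) (div_pos hq₁ hp₁).le
    (sub_nonneg.mpr hs) (add_sub_cancel _ _)
  rw [hq_eq] at hconc
  change kappa G p x y / (1 - p) ≤ kappa G q x y / (1 - q)
  rw [le_div_iff₀ hq₁]
  calc kappa G p x y / (1 - p) * (1 - q) = (1 - q) / (1 - p) * kappa G p x y := by ring
    _ ≤ (1 - q) / (1 - p) * kappa G p x y + (1 - (1 - q) / (1 - p)) * kappa G 1 x y :=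
        le_add_of_nonneg_right (mul_nonneg (sub_nonneg.mpr hs) (kappa_one_nonneg h))
    _ ≤ kappa G q x y := hconc

lemma IsOneLipschitz.kappa_div_le (hf : IsOneLipschitz G f) (hfxy : f y - f x = 1)
    (hx : 0 < deg G x) (hy : 0 < deg G y) (hp : p ∈ Set.Ico (0 : ℝ) 1) :
    kappa G p x y / (1 - p) ≤ laplacian G f x - laplacian G f y := by
  have hW := hf.sum_mul_sub_le_W1 (mu_mem_stdSimplex ⟨hp.1, hp.2.le⟩ hx)
    (mu_mem_stdSimplex ⟨hp.1, hp.2.le⟩ hy)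
  rw [sum_mul_mu p f hx, sum_mul_mu p f hy] at hW
  rw [div_le_iff₀ (sub_pos.mpr hp.2), kappa]
  linarith

theorem IsOneLipschitz.kappaLLY_le (hf : IsOneLipschitz G f) (h : G.Adj x y)
    (hfxy : f y - f x = 1) : kappaLLY G x y ≤ laplacian G f x - laplacian G f y := by
  have hle : ∀ r ∈ (fun p => kappa G p x y / (1 - p)) '' Set.Ioo 0 1,
      r ≤ laplacian G f x - laplacian G f y := by
    rintro _ ⟨p, hp, rfl⟩
    exact hf.kappa_div_le hfxy (deg_pos_of_adj h) (deg_pos_of_adj h.symm) ⟨hp.1.le, hp.2⟩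
  have hne : (Set.Ioo (0 : ℝ) 1).Nonempty := Set.nonempty_Ioo.mpr one_pos
  have hlim := (monotoneOn_kappa_div h).tendsto_nhdsWithin_Ioo_left hne ⟨_, hle⟩
  rw [kappaLLY, hlim.limUnder_eq]
  exact csSup_le (hne.image _) hle

end Curvature

/-! ### Rigidity in the Bonnet-Myers inequality -/

section Rigidity

variable {V : Type*} [Fintype V] {G : SimpleGraph V} {f : V → ℝ} {K : ℝ} {u v x y z : V}

lemma laplacian_neg (G : SimpleGraph V) (f : V → ℝ) (x : V) :
    laplacian G (-f) x = -laplacian G f x := by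
  simp only [laplacian, Pi.neg_apply, ← neg_div, ← sum_neg_distrib]
  congr! 2
  ring

lemma IsOneLipschitz.laplacian_le_one (hf : IsOneLipschitz G f) (x : V) :
    laplacian G f x ≤ 1 := by
  refine div_le_one_of_le₀ ?_ (Nat.cast_nonneg _)
  calc ∑ z with G.Adj x z, (f z - f x) ≤ ∑ z with G.Adj x z, (1 : ℝ) :=
        sum_le_sum fun z hz => hf.sub_le_one (mem_filter.mp hz).2
    _ = deg G x := by simp [deg]

lemma IsOneLipschitz.neg_one_le_laplacian (hf : IsOneLipschitz G f) (x : V) :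
    -1 ≤ laplacian G f x :=
  neg_le.mp (laplacian_neg G f x ▸ hf.neg.laplacian_le_one x)

lemma IsOneLipschitz.mul_length_le_laplacian_sub (hf : IsOneLipschitz G f)
    (hK : ∀ x y, G.Adj x y → K ≤ kappaLLY G x y) (w : G.Walk u v) (hw : f v - f u = w.length) :
    K * w.length ≤ laplacian G f u - laplacian G f v := by
  induction w with
  | nil => simp
  | @cons u y v h w ih =>
    rw [SimpleGraph.Walk.length_cons, Nat.cast_succ] at hw ⊢
    have hyv : f v - f y ≤ w.length := (hf y v).trans (by exact_mod_cast SimpleGraph.dist_le w)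
    have huy : f y - f u ≤ 1 := hf.sub_le_one h
    have hκ := (hK u y h).trans (hf.kappaLLY_le h (by linarith))
    linarith [ih (by linarith)]

theorem IsOneLipschitz.laplacian_eq_of_le_kappaLLY (hf : IsOneLipschitz G f)
    (hK : ∀ x y, G.Adj x y → K ≤ kappaLLY G x y) (w₁ : G.Walk u z) (w₂ : G.Walk z v)
    (h₁ : f z - f u = w₁.length) (h₂ : f v - f z = w₂.length)
    (hmax : K * (w₁.length + w₂.length) = 2) : laplacian G f z = 1 - K * w₁.length := by
  have huz := hf.mul_length_le_laplacian_sub hK w₁ h₁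
  have hzv := hf.mul_length_le_laplacian_sub hK w₂ h₂
  linarith [hf.laplacian_le_one u, hf.neg_one_le_laplacian v]

lemma BMSharp.two_div_diam_le_kappaLLY (hG : BMSharp G) (h : G.Adj x y) :
    2 / (diam G : ℝ) ≤ kappaLLY G x y := by
  rw [← show sInf _ = 2 / (diam G : ℝ) from hG]
  refine csInf_le (Set.Finite.bddBelow ?_) ⟨x, y, h, rfl⟩
  refine (Set.finite_range fun e : V × V => kappaLLY G e.1 e.2).subset ?_
  rintro _ ⟨u, v, -, rfl⟩
  exact ⟨(u, v), rfl⟩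

end Rigidity

/-! ### Antitrees -/

section Antitree

/-- The index of the layer containing a vertex, as a real number; layers are counted from `0`. -/
def layerIndex {N : ℕ} {a : Fin N → ℕ} (x : Σ k : Fin N, Fin (a k)) : ℝ := (x.1 : ℕ)

variable {N : ℕ} {a : Fin N → ℕ}

lemma exists_antitree_walk_of_lt (ha : ∀ k, 0 < a k) {u v : Σ k : Fin N, Fin (a k)}
    (h : u.1 < v.1) :
    ∃ w : (antitree N a).Walk u v, (u.1 : ℕ) + w.length = v.1 := by
  rcases (Nat.succ_le_of_lt h).eq_or_lt with hv | hv
  · have huv : (antitree N a).Adj u v := ⟨fun e => h.ne (congrArg Sigma.fst e), .inr (.inl hv)⟩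
    exact ⟨huv.toWalk, hv⟩
  · let m : Σ k : Fin N, Fin (a k) := ⟨⟨u.1 + 1, hv.trans v.1.2⟩, ⟨0, ha _⟩⟩
    have hum : (antitree N a).Adj u m :=
      ⟨fun e => (Nat.lt_succ_self _).ne (congrArg (fun x => (x.1 : ℕ)) e), .inr (.inl rfl)⟩
    obtain ⟨w, hw⟩ := exists_antitree_walk_of_lt ha (u := m) (v := v) (Fin.lt_def.mpr hv)
    exact ⟨.cons hum w, by rw [SimpleGraph.Walk.length_cons, ← hw]; simp only [m]; omega⟩
termination_by (v.1 : ℕ) - u.1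

lemma exists_antitree_walk_length_lt (ha : ∀ k, 0 < a k) (u v : Σ k : Fin N, Fin (a k)) :
    ∃ w : (antitree N a).Walk u v, w.length < max N 2 := by
  rcases lt_trichotomy u.1 v.1 with h | h | h
  · obtain ⟨w, hw⟩ := exists_antitree_walk_of_lt ha h
    exact ⟨w, by omega⟩
  · by_cases huv : u = v
    · subst huv
      exact ⟨.nil, by rw [SimpleGraph.Walk.length_nil]; omega⟩
    · have hadj : (antitree N a).Adj u v := ⟨huv, .inl (congrArg Fin.val h)⟩
      exact ⟨hadj.toWalk, lt_max_of_lt_right one_lt_two⟩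
  · obtain ⟨w, hw⟩ := exists_antitree_walk_of_lt ha h
    exact ⟨w.reverse, by rw [SimpleGraph.Walk.length_reverse]; omega⟩

lemma antitree_preconnected (ha : ∀ k, 0 < a k) : (antitree N a).Preconnected := fun u v =>
  (exists_antitree_walk_length_lt ha u v).choose.reachable

lemma isOneLipschitz_layerIndex (ha : ∀ k, 0 < a k) :
    IsOneLipschitz (antitree N a) layerIndex := by
  refine isOneLipschitz_of_adj (antitree_preconnected ha) fun x y h => ?_
  rw [sub_le_iff_le_add', layerIndex, layerIndex]
  have hlayer := h.2
  exact_mod_cast (by omega : (y.1 : ℕ) ≤ x.1 + 1)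

lemma sum_filter_adj_antitree (g : Fin N → ℝ) {i j k : Fin N} (hij : (i : ℕ) + 1 = j)
    (hjk : (j : ℕ) + 1 = k) {x : Σ k : Fin N, Fin (a k)} (hx : x.1 = j) :
    ∑ z with (antitree N a).Adj x z, g z.1 = a i * g i + a j * g j + a k * g k - g j := by
  have hnbr : ({z | (antitree N a).Adj x z} : Finset (Σ k : Fin N, Fin (a k))) =
      (({i, j, k} : Finset (Fin N)).sigma fun _ => univ).erase x := by
    ext z
    simp only [antitree, mem_filter, mem_univ, true_and, mem_erase, mem_sigma, mem_insert,
      mem_singleton, and_true, hx, Fin.ext_iff]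
    exact and_congr ne_comm (by omega)
  have hxmem : x ∈ ({i, j, k} : Finset (Fin N)).sigma fun l => (univ : Finset (Fin (a l))) := by
    simp [hx]
  have hi : i ∉ ({j, k} : Finset (Fin N)) := by
    simp only [mem_insert, mem_singleton, Fin.ext_iff]
    omega
  have hj : j ∉ ({k} : Finset (Fin N)) := by
    simp only [mem_singleton, Fin.ext_iff]
    omega
  rw [hnbr, sum_erase_eq_sub hxmem, sum_sigma, sum_insert hi, sum_insert hj, sum_singleton, hx]
  simp [add_assoc]

lemma laplacian_layerIndex {i j k : Fin N} (hij : (i : ℕ) + 1 = j) (hjk : (j : ℕ) + 1 = k)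
    {x : Σ k : Fin N, Fin (a k)} (hx : x.1 = j) :
    laplacian (antitree N a) layerIndex x = (a k - a i : ℝ) / (a i + a j + a k - 1) := by
  have hdeg : (deg (antitree N a) x : ℝ) = a i + a j + a k - 1 := by
    simpa [deg] using sum_filter_adj_antitree (fun _ => 1) hij hjk hx
  have hsum : ∑ z with (antitree N a).Adj x z, (layerIndex z - layerIndex x) = a k - a i := by
    have hi : ((i : ℕ) : ℝ) = j - 1 := by rw [← hij]; push_cast; ring
    have hk : ((k : ℕ) : ℝ) = j + 1 := by rw [← hjk]; push_cast; ring
    refine (sum_filter_adj_antitree (fun l => ((l : ℕ) - (x.1 : ℕ) : ℝ)) hij hjk hx).trans ?_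
    rw [hx, hi, hk]
    ring
  rw [laplacian, hsum, hdeg]

end Antitree

/-! ### Bonnet-Myers sharp antitrees -/

section SharpAntitree

variable {L : ℕ} {a : Fin (L + 1) → ℕ}

lemma diam_antitree (ha : ∀ k, 0 < a k) (hL : 0 < L) : diam (antitree (L + 1) a) = L := by
  refine le_antisymm (Finset.sup_le fun e _ => ?_) ?_
  · obtain ⟨w, hw⟩ := exists_antitree_walk_length_lt ha e.1 e.2
    exact (SimpleGraph.dist_le w).trans (by omega)
  · let u : Σ k : Fin (L + 1), Fin (a k) := ⟨0, ⟨0, ha 0⟩⟩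
    let v : Σ k : Fin (L + 1), Fin (a k) := ⟨Fin.last L, ⟨0, ha _⟩⟩
    have huv : L ≤ (antitree (L + 1) a).dist u v := by
      have h := isOneLipschitz_layerIndex ha u v
      simpa [layerIndex, u, v] using h
    exact huv.trans (le_sup (f := fun e : _ × _ => (antitree (L + 1) a).dist e.1 e.2)
      (mem_univ (u, v)))

lemma BMSharp.laplacian_layerIndex_eq_one_sub (hG : BMSharp (antitree (L + 1) a))
    (ha : ∀ k, 0 < a k) {x : Σ k : Fin (L + 1), Fin (a k)} (h₀ : 0 < (x.1 : ℕ))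
    (hL : (x.1 : ℕ) < L) :
    laplacian (antitree (L + 1) a) layerIndex x = 1 - 2 / L * layerIndex x := by
  have hLpos : 0 < L := h₀.trans hL
  let u : Σ k : Fin (L + 1), Fin (a k) := ⟨0, ⟨0, ha 0⟩⟩
  let v : Σ k : Fin (L + 1), Fin (a k) := ⟨Fin.last L, ⟨0, ha _⟩⟩
  obtain ⟨w₁, hw₁⟩ := exists_antitree_walk_of_lt ha (u := u) (v := x) (Fin.lt_def.mpr h₀)
  obtain ⟨w₂, hw₂⟩ := exists_antitree_walk_of_lt ha (u := x) (v := v) (Fin.lt_def.mpr hL)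
  have hux : layerIndex u + w₁.length = layerIndex x := by
    simp only [layerIndex]
    exact_mod_cast hw₁
  have hxv : layerIndex x + w₂.length = layerIndex v := by
    simp only [layerIndex]
    exact_mod_cast hw₂
  have hu : layerIndex u = 0 := Nat.cast_zero
  have hv : layerIndex v = L := rfl
  have hK (y z) (h : (antitree (L + 1) a).Adj y z) :
      2 / (L : ℝ) ≤ kappaLLY (antitree (L + 1) a) y z := by
    simpa only [diam_antitree ha hLpos] using hG.two_div_diam_le_kappaLLY h
  have hmax : 2 / (L : ℝ) * (w₁.length + w₂.length) = 2 := by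
    rw [show (w₁.length + w₂.length : ℝ) = L by linarith]
    exact div_mul_cancel₀ 2 (Nat.cast_ne_zero.mpr hLpos.ne')
  rw [(isOneLipschitz_layerIndex ha).laplacian_eq_of_le_kappaLLY hK w₁ w₂
    (by linarith) (by linarith) hmax, ← hux, hu, zero_add]

theorem BMSharp.antitree_card_eq (hG : BMSharp (antitree (L + 1) a)) (ha : ∀ k, 0 < a k)
    {i j k : Fin (L + 1)} (hij : (i : ℕ) + 1 = j) (hjk : (j : ℕ) + 1 = k) :
    (L : ℤ) * (a k - a i) = (L - 2 * (j : ℕ)) * (a i + a j + a k - 1) := by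
  let x : Σ k : Fin (L + 1), Fin (a k) := ⟨j, ⟨0, ha j⟩⟩
  have hL : (L : ℝ) ≠ 0 := Nat.cast_ne_zero.mpr (by omega)
  have hdeg : (a i + a j + a k - 1 : ℝ) ≠ 0 := by
    have hi : (1 : ℝ) ≤ a i := Nat.one_le_cast.mpr (ha i)
    have hj : (1 : ℝ) ≤ a j := Nat.one_le_cast.mpr (ha j)
    have hk : (1 : ℝ) ≤ a k := Nat.one_le_cast.mpr (ha k)
    linarith
  have h := hG.laplacian_layerIndex_eq_one_sub ha (x := x) (by simp only [x]; omega)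
    (by simp only [x]; omega)
  rw [laplacian_layerIndex hij hjk rfl, div_eq_iff hdeg] at h
  have hreal : (L : ℝ) * (a k - a i) = (L - 2 * (j : ℕ)) * (a i + a j + a k - 1) := by
    rw [h]
    simp only [layerIndex, x]
    field_simp
  exact_mod_cast hreal

end SharpAntitree

theorem stmt15_general (n : ℕ) (a : Fin (6 * n + 6) → ℕ) (ha : ∀ k, 0 < a k) :
    ¬ BMSharp (antitree (6 * n + 6) a) := by
  intro hG
  let i : Fin (6 * n + 6) := ⟨3 * n + 1, by omega⟩
  let j : Fin (6 * n + 6) := ⟨3 * n + 2, by omega⟩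
  let k : Fin (6 * n + 6) := ⟨3 * n + 3, by omega⟩
  let l : Fin (6 * n + 6) := ⟨3 * n + 4, by omega⟩
  have hj := hG.antitree_card_eq ha (i := i) (j := j) (k := k) rfl rfl
  have hk := hG.antitree_card_eq ha (i := j) (j := k) (k := l) rfl rfl
  simp only [j, k] at hj hk
  push_cast at hj hk
  have h3 : (3 : ℤ) ∣ 2 :=
    ⟨(2 * n + 2) * (a i + a l) - (2 * n + 1) * (a j + a k), by linear_combination hj - hk⟩
  norm_num at h3

/-- No symmetrical antitree `AT(1,b,c,c,b,1)` of diameter 5 (with `a_1 = 1`) is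
Bonnet-Myers sharp. -/
theorem stmt15 (b c : ℕ) (hb : 0 < b) (hc : 0 < c) :
    ¬ BMSharp (antitree 6 ![1, b, c, c, b, 1]) :=
  stmt15_general 0 ![1, b, c, c, b, 1] (by simp [Fin.forall_fin_succ, hb, hc])
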